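/- arXiv:2412.07337 — 2 statements merged into one kernel-verified Lean document; each statement's English description precedes it below -/
import Mathlib

section
/- Let α, α' : Fin 2 → ℂ be orthonormal, let (u₀, u₁) and (w₀, w₁) be orthonormal bases of ℂ², let s, t be nonzero real numbers with s² + t² = 1, and set Φ = s • (u₀ ⊗ w₀) + t • (u₁ ⊗ w₁), Φ' = u₀ ⊗ w₁, and χ = p • (u₀ ⊗ w₁) + q • (u₁ ⊗ w₀) where p, q are nonzero complex numbers. Let c, d be nonzero real numbers with c² + d² = 1 and set Ψ = c • (α ⊗ Φ) + d • (α' ⊗ Φ'). Then for all complex numbers x, y not both zero and all nonzero complex numbers a, b, the state a • Ψ + b • ((x • α + y • α') ⊗ χ) is not completely product. -/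
/-- Tensor product of two single-qubit vectors, as a two-qubit coefficient matrix. -/
def tq (x y : Fin 2 → ℂ) : Fin 2 → Fin 2 → ℂ := fun j k => x j * y k

/-- Tensor product of a single-qubit vector with a two-qubit state, giving a
three-qubit coefficient tensor. -/
def tqq (α : Fin 2 → ℂ) (w : Fin 2 → Fin 2 → ℂ) : Fin 2 → Fin 2 → Fin 2 → ℂ :=
  fun i j k => α i * w j k

/-- A two-qubit state is a product state if its coefficient matrix factorizes. -/
def ProdState (w : Fin 2 → Fin 2 → ℂ) : Prop :=
  ∃ f g : Fin 2 → ℂ, ∀ j k, w j k = f j * g k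

/-- A two-qubit state is entangled if it is nonzero and not a product state. -/
def Entangled2 (w : Fin 2 → Fin 2 → ℂ) : Prop := w ≠ 0 ∧ ¬ ProdState w

/-- A three-qubit state is completely product if its coefficient tensor factorizes. -/
def CompProd3 (v : Fin 2 → Fin 2 → Fin 2 → ℂ) : Prop :=
  ∃ f g h : Fin 2 → ℂ, ∀ i j k, v i j k = f i * g j * h k

/-- Hermitian inner product on single-qubit vectors. -/
noncomputable def ip1 (u v : Fin 2 → ℂ) : ℂ := ∑ i, (starRingEnd ℂ) (u i) * v i

/-- Hermitian inner product on two-qubit states. -/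
noncomputable def ip2 (u v : Fin 2 → Fin 2 → ℂ) : ℂ := ∑ j, ∑ k, (starRingEnd ℂ) (u j k) * v j k

/-- Hermitian inner product on three-qubit states. -/
noncomputable def ip3 (u v : Fin 2 → Fin 2 → Fin 2 → ℂ) : ℂ :=
  ∑ i, ∑ j, ∑ k, (starRingEnd ℂ) (u i j k) * v i j k

theorem ip1_symm_zero (u v : Fin 2 → ℂ) (h : ip1 u v = 0) : ip1 v u = 0 := by
  have h2 := congrArg (starRingEnd ℂ) h
  simp only [ip1, Fin.sum_univ_two, map_add, map_mul, Complex.conj_conj, map_zero] at h2 ⊢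
  linear_combination h2

/-- Proposition 5: with `Φ = s • u₀⊗w₀ + t • u₁⊗w₁`, `Φ' = u₀ ⊗ w₁`,
`χ = p • u₀⊗w₁ + q • u₁⊗w₀` bi-orthogonal to `Φ`, and
`Ψ = c • α ⊗ Φ + d • α' ⊗ Φ'`, any nontrivial superposition of `Ψ` with the
bi-separable state `(x • α + y • α') ⊗ χ` is never completely product. -/
theorem superposition_with_biorthogonal_biseparable_not_completely_product
    (α α' u₀ u₁ w₀ w₁ : Fin 2 → ℂ)
    (hαn : ip1 α α = 1) (hα'n : ip1 α' α' = 1) (hαα' : ip1 α α' = 0)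
    (hu₀ : ip1 u₀ u₀ = 1) (hu₁ : ip1 u₁ u₁ = 1) (hu : ip1 u₀ u₁ = 0)
    (hw₀ : ip1 w₀ w₀ = 1) (hw₁ : ip1 w₁ w₁ = 1) (hw : ip1 w₀ w₁ = 0)
    (s t : ℝ) (hs : s ≠ 0) (ht : t ≠ 0) (hst : s ^ 2 + t ^ 2 = 1)
    (p q : ℂ) (hp : p ≠ 0) (hq : q ≠ 0)
    (c d : ℝ) (hc : c ≠ 0) (hd : d ≠ 0) (hcd : c ^ 2 + d ^ 2 = 1) :
    ∀ x y : ℂ, ¬ (x = 0 ∧ y = 0) → ∀ a b : ℂ, a ≠ 0 → b ≠ 0 →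
      ¬ CompProd3 (a • ((c : ℂ) • tqq α ((s : ℂ) • tq u₀ w₀ + (t : ℂ) • tq u₁ w₁)
          + (d : ℂ) • tqq α' (tq u₀ w₁))
        + b • tqq (x • α + y • α') (p • tq u₀ w₁ + q • tq u₁ w₀)) := by
  rintro x y - a b ha hb ⟨f, g, h, hf⟩
  simp only [tqq, tq, Pi.add_apply, Pi.smul_apply, smul_eq_mul] at hf
  have key : ∀ A B C : Fin 2 → ℂ,
      a * (c * (ip1 A α * (s * (ip1 B u₀ * ip1 C w₀) + t * (ip1 B u₁ * ip1 C w₁)))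
        + d * (ip1 A α' * (ip1 B u₀ * ip1 C w₁)))
      + b * ((x * ip1 A α + y * ip1 A α')
        * (p * (ip1 B u₀ * ip1 C w₁) + q * (ip1 B u₁ * ip1 C w₀)))
      = ip1 A f * ip1 B g * ip1 C h := by
    intro A B C
    simp only [ip1, Fin.sum_univ_two]
    linear_combination (starRingEnd ℂ) (A 0) * (starRingEnd ℂ) (B 0) * (starRingEnd ℂ) (C 0) * hf 0 0 0
      + (starRingEnd ℂ) (A 0) * (starRingEnd ℂ) (B 0) * (starRingEnd ℂ) (C 1) * hf 0 0 1
      + (starRingEnd ℂ) (A 0) * (starRingEnd ℂ) (B 1) * (starRingEnd ℂ) (C 0) * hf 0 1 0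
      + (starRingEnd ℂ) (A 0) * (starRingEnd ℂ) (B 1) * (starRingEnd ℂ) (C 1) * hf 0 1 1
      + (starRingEnd ℂ) (A 1) * (starRingEnd ℂ) (B 0) * (starRingEnd ℂ) (C 0) * hf 1 0 0
      + (starRingEnd ℂ) (A 1) * (starRingEnd ℂ) (B 0) * (starRingEnd ℂ) (C 1) * hf 1 0 1
      + (starRingEnd ℂ) (A 1) * (starRingEnd ℂ) (B 1) * (starRingEnd ℂ) (C 0) * hf 1 1 0
      + (starRingEnd ℂ) (A 1) * (starRingEnd ℂ) (B 1) * (starRingEnd ℂ) (C 1) * hf 1 1 1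
  have hα := ip1_symm_zero _ _ hαα'
  have hu' := ip1_symm_zero _ _ hu
  have hw' := ip1_symm_zero _ _ hw
  have hs' : (s : ℂ) ≠ 0 := by exact_mod_cast hs
  have ht' : (t : ℂ) ≠ 0 := by exact_mod_cast ht
  have hc' : (c : ℂ) ≠ 0 := by exact_mod_cast hc
  have hd' : (d : ℂ) ≠ 0 := by exact_mod_cast hd
  have k000 := key α u₀ w₀
  have k100 := key α' u₀ w₀
  have k101 := key α' u₀ w₁
  have k110 := key α' u₁ w₀
  simp only [hαn, hα'n, hαα', hα, hu₀, hu₁, hu, hu', hw₀, hw₁, hw, hw', mul_zero, mul_one,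
    zero_mul, add_zero, zero_add, one_mul] at k000 k100 k101 k110
  have hne : ip1 α f * ip1 u₀ g * ip1 w₀ h ≠ 0 := by
    rw [← k000]
    exact mul_ne_zero ha (mul_ne_zero hc' hs')
  have hG : ip1 u₀ g ≠ 0 := fun h0 => hne (by simp [h0])
  have hH : ip1 w₀ h ≠ 0 := fun h0 => hne (by simp [h0])
  have hF : ip1 α' f = 0 := by
    have h0 := k100.symm
    simpa [hG, hH] using h0
  have hy : y = 0 := by
    simpa [hF, hb, hq] using k110
  simp [hF, hy, ha, hd] at k101
end

section
/- Let ω = exp(2πi/3) and let ψ₁,…,ψ₆ be the six three-qubit W-UEB states: ψ₁ = (1/√3)(|001⟩+|010⟩+|100⟩), ψ₂ = (1/√3)(|001⟩+ω|010⟩+ω²|100⟩), ψ₃ = (1/√3)(|001⟩+ω²|010⟩+ω|100⟩), ψ₄ = (1/√3)(|000⟩+|101⟩+|110⟩), ψ₅ = (1/√3)(|000⟩+ω|101⟩+ω²|110⟩), ψ₆ = (1/√3)(|000⟩+ω²|101⟩+ω|110⟩). Then every three-qubit state v satisfying ⟨ψₘ, v⟩ = 0 for all m ∈ {1,…,6}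 is completely product; that is, the six entangled states form an unextendible entangled basis whose orthogonal complement (spanned by |011⟩ and |111⟩) contains only completely product states. -/
/-- The standard basis ket `|i j k⟩` of the three-qubit space. -/
def ket (i j k : Fin 2) : Fin 2 → Fin 2 → Fin 2 → ℂ :=
  fun i' j' k' => if i' = i ∧ j' = j ∧ k' = k then 1 else 0

/-- The cube root of unity `ω = exp(2πi/3)`. -/
noncomputable def ω : ℂ := Complex.exp (2 * Real.pi * Complex.I / 3)

/-- The six states of the three-qubit W-type unextendible entangled basis. -/
noncomputable def ψW : Fin 6 → (Fin 2 → Fin 2 → Fin 2 → ℂ) :=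
  ![((Real.sqrt 3 : ℂ))⁻¹ • (ket 0 0 1 + ket 0 1 0 + ket 1 0 0),
    ((Real.sqrt 3 : ℂ))⁻¹ • (ket 0 0 1 + ω • ket 0 1 0 + ω ^ 2 • ket 1 0 0),
    ((Real.sqrt 3 : ℂ))⁻¹ • (ket 0 0 1 + ω ^ 2 • ket 0 1 0 + ω • ket 1 0 0),
    ((Real.sqrt 3 : ℂ))⁻¹ • (ket 0 0 0 + ket 1 0 1 + ket 1 1 0),
    ((Real.sqrt 3 : ℂ))⁻¹ • (ket 0 0 0 + ω • ket 1 0 1 + ω ^ 2 • ket 1 1 0),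
    ((Real.sqrt 3 : ℂ))⁻¹ • (ket 0 0 0 + ω ^ 2 • ket 1 0 1 + ω • ket 1 1 0)]

/-- The conjugate of `ω` satisfies the cyclotomic relation. -/
lemma conj_omega_rel : 1 + (starRingEnd ℂ) ω + (starRingEnd ℂ) ω ^ 2 = 0 := by
  have hp : IsPrimitiveRoot ω 3 := by
    have := Complex.isPrimitiveRoot_exp 3 (by norm_num)
    simpa [ω] using this
  have h := hp.geom_sum_eq_zero (by norm_num)
  simp only [Finset.sum_range_succ, Finset.sum_range_zero, pow_zero, pow_one, zero_add] at h
  have h2 := congrArg (starRingEnd ℂ) h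
  simpa using h2

/-- Invertibility of the three-dimensional Fourier matrix. -/
lemma fourier3 (w a b c : ℂ) (hw : 1 + w + w ^ 2 = 0) (h1 : a + b + c = 0)
    (h2 : a + w * b + w ^ 2 * c = 0) (h3 : a + w ^ 2 * b + w * c = 0) :
    a = 0 ∧ b = 0 ∧ c = 0 := by
  have h3' : (3 : ℂ) ≠ 0 := by norm_num
  have ha : a = 0 := by
    apply mul_left_cancel₀ h3'
    linear_combination h1 + h2 + h3 - (b + c) * hw
  have hb : b = 0 := by
    apply mul_left_cancel₀ h3'
    linear_combination h1 + w ^ 2 * h2 + w * h3 - a * hw - 2 * b * (w - 1) * hw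
      - c * (w ^ 2 - w + 1) * hw
  refine ⟨ha, hb, ?_⟩
  linear_combination h1 - ha - hb

/-- The W-UEB is an unextendible entangled basis: every three-qubit state orthogonal
to all six W-UEB states is completely product. -/
theorem wUEB_orthocomplement_completely_product
    (v : Fin 2 → Fin 2 → Fin 2 → ℂ) (hv : ∀ m : Fin 6, ip3 (ψW m) v = 0) :
    CompProd3 v := by
  have hs : (Real.sqrt 3 : ℂ) ≠ 0 := by
    simp
  have hw := conj_omega_rel
  have e0 := hv 0
  have e1 := hv 1
  have e2 := hv 2
  have e3 := hv 3
  have e4 := hv 4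
  have e5 := hv 5
  simp [ip3, ψW, ket, Fin.sum_univ_two] at e0 e1 e2 e3 e4 e5
  generalize (starRingEnd ℂ) ω = w at *
  have hs' := inv_ne_zero hs
  generalize ((Real.sqrt 3 : ℂ))⁻¹ = s at *
  obtain ⟨h1, h2, h3⟩ := fourier3 w (v 0 0 1) (v 0 1 0) (v 1 0 0) hw
    (mul_left_cancel₀ hs' (by linear_combination e0))
    (mul_left_cancel₀ hs' (by linear_combination e1))
    (mul_left_cancel₀ hs' (by linear_combination e2))
  obtain ⟨h4, h5, h6⟩ := fourier3 w (v 0 0 0) (v 1 0 1) (v 1 1 0) hw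
    (mul_left_cancel₀ hs' (by linear_combination e3))
    (mul_left_cancel₀ hs' (by linear_combination e4))
    (mul_left_cancel₀ hs' (by linear_combination e5))
  refine ⟨fun i => v i 1 1, ![0, 1], ![0, 1], fun i j k => ?_⟩
  fin_cases i <;> fin_cases j <;> fin_cases k <;> simp [h1, h2, h3, h4, h5, h6]
end
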